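/- Let n ≥ 2 and τ ∈ (0,1). For every p in the probability simplex Δ_n and every u ∈ R^n, Σ_{y} p_y ψ^CS(y,u) − inf_{u'∈R^n} Σ_y p_y ψ^CS(y,u') ≥ 2 min(τ, 1−τ) · ( p·ℓ_{pred^CS_τ(u)} − min_{t∈[n+1]} p·ℓ_t ), where ℓ = ℓ^{1/2} is the abstain(1/2) loss. -/

import Mathlib

open scoped BigOperators

/-- The abstain(1/2) loss is `abstainLoss n (1/2)`. -/
noncomputable def abstainLoss (n : ℕ) (α : ℝ) (y : Fin n) (t : Fin (n + 1)) : ℝ :=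
  if t = Fin.last n then α else if (t : ℕ) = (y : ℕ) then 0 else 1

/-- Crammer–Singer surrogate: `ψ^CS(y,u) = max(0, max_{j≠y} u_j − u_y + 1)`. -/
noncomputable def psiCS (n : ℕ) (y : Fin n) (u : Fin n → ℝ) : ℝ :=
  max ((⨆ j : {j : Fin n // j ≠ y}, u j.1) - u y + 1) 0

/-- The largest component of `u`. -/
noncomputable def top1 (n : ℕ) (u : Fin n → ℝ) : ℝ := ⨆ i, u i

/-- The second-largest component of `u` (descending order, with multiplicity). -/
noncomputable def top2 (n : ℕ) (u : Fin n → ℝ) : ℝ :=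
  ⨅ i, ⨆ j : {j : Fin n // j ≠ i}, u j.1

/-- `pred^CS_τ`: an index attaining `max_i u_i` if `u_(1) − u_(2) > τ` (the maximizer is
unique in this case), and `n+1` otherwise. -/
noncomputable def predCS (n : ℕ) (τ : ℝ) (u : Fin n → ℝ) : Fin (n + 1) :=
  if h : (τ < top1 n u - top2 n u) ∧ ∃ y : Fin n, ∀ i, u i ≤ u y then
    Fin.castSucc h.2.choose
  else Fin.last n

/-!
Let `y` maximize `u`, and let `c ∈ [0, 1]` be the margin of `u` clipped at `1`. The surrogate loss
`ψ^CS(·, u)` dominates `2 ((1 - c) ℓ_{n+1} + c ℓ_y)` pointwise, with equality at `y`. On the other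
hand `ψ^CS(·, e_k) = 2 ℓ_k` and `ψ^CS(·, 0) = 2 ℓ_{n+1}`, so the optimal surrogate risk is at most
twice the optimal abstain risk. Hence the surrogate regret at `u` is at least twice the convex
combination of the abstain regrets of `n+1` and `y` with weights `1 - c` and `c`, and the weight of
the prediction made at threshold `τ` is at least `min τ (1 - τ)`.
-/

section Risk

variable {ι T U : Type*} [Fintype ι] {p : ι → ℝ} {ℓ : ι → T → ℝ} {ψ : ι → U → ℝ}

/-- The conditional risk `p·ℓ_t` of the prediction `t`, for arbitrary weights `p`. -/
noncomputable def condRisk (p : ι → ℝ) (ℓ : ι → T → ℝ) (t : T) : ℝ := ∑ y, p y * ℓ y t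

/-- The conditional Bayes risk `inf_t p·ℓ_t`, which is `0` if the risks are not bounded below. -/
noncomputable def condBayesRisk (p : ι → ℝ) (ℓ : ι → T → ℝ) : ℝ := ⨅ t, condRisk p ℓ t

/-- The conditional regret `p·ℓ_t - inf_{t'} p·ℓ_{t'}` of the prediction `t`. -/
noncomputable def condRegret (p : ι → ℝ) (ℓ : ι → T → ℝ) (t : T) : ℝ :=
  condRisk p ℓ t - condBayesRisk p ℓ

lemma condBayesRisk_le_condRisk (hp : ∀ y, 0 ≤ p y) (hℓ : ∀ y t, 0 ≤ ℓ y t) (t : T) :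
    condBayesRisk p ℓ ≤ condRisk p ℓ t := by
  refine ciInf_le ⟨0, ?_⟩ t
  rintro _ ⟨s, rfl⟩
  exact Finset.sum_nonneg fun y _ => mul_nonneg (hp y) (hℓ y s)

lemma condRegret_nonneg (hp : ∀ y, 0 ≤ p y) (hℓ : ∀ y t, 0 ≤ ℓ y t) (t : T) :
    0 ≤ condRegret p ℓ t :=
  sub_nonneg.mpr (condBayesRisk_le_condRisk hp hℓ t)

lemma condBayesRisk_le_mul_of_embedding [Nonempty T] (hp : ∀ y, 0 ≤ p y)
    (hψ : ∀ y u, 0 ≤ ψ y u) {c : ℝ} (hc : 0 ≤ c) (φ : T → U)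
    (hφ : ∀ y t, ψ y (φ t) ≤ c * ℓ y t) :
    condBayesRisk p ψ ≤ c * condBayesRisk p ℓ := by
  have hrisk (t : T) : condBayesRisk p ψ ≤ c * condRisk p ℓ t :=
    calc condBayesRisk p ψ ≤ condRisk p ψ (φ t) := condBayesRisk_le_condRisk hp hψ (φ t)
      _ ≤ ∑ y, p y * (c * ℓ y t) :=
        Finset.sum_le_sum fun y _ => mul_le_mul_of_nonneg_left (hφ y t) (hp y)
      _ = c * condRisk p ℓ t := by simp only [condRisk, Finset.mul_sum, mul_left_comm]
  calc condBayesRisk p ψ ≤ ⨅ t, c * condRisk p ℓ t := le_ciInf hrisk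
    _ = c * condBayesRisk p ℓ := (Real.mul_iInf_of_nonneg hc _).symm

lemma add_mul_condRisk_le_of_forall_le (hp : ∀ y, 0 ≤ p y) {a b : ℝ} {s t : T} {u : U}
    (h : ∀ y, a * ℓ y s + b * ℓ y t ≤ ψ y u) :
    a * condRisk p ℓ s + b * condRisk p ℓ t ≤ condRisk p ψ u :=
  calc a * condRisk p ℓ s + b * condRisk p ℓ t = ∑ y, p y * (a * ℓ y s + b * ℓ y t) := by
        simp only [condRisk, Finset.mul_sum, mul_add, Finset.sum_add_distrib, mul_left_comm]
    _ ≤ condRisk p ψ u :=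
        Finset.sum_le_sum fun y _ => mul_le_mul_of_nonneg_left (h y) (hp y)

end Risk

section AbstainLoss

variable {n : ℕ}

lemma abstainLoss_last (α : ℝ) (y : Fin n) : abstainLoss n α y (Fin.last n) = α := if_pos rfl

lemma abstainLoss_castSucc (α : ℝ) (y k : Fin n) :
    abstainLoss n α y k.castSucc = if k = y then 0 else 1 := by
  simp only [abstainLoss, k.castSucc_ne_last, if_false, Fin.val_castSucc, Fin.val_inj]

lemma abstainLoss_nonneg {α : ℝ} (hα : 0 ≤ α) (y : Fin n) (t : Fin (n + 1)) :
    0 ≤ abstainLoss n α y t := by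
  unfold abstainLoss
  positivity

/-- The point of `ℝ^n` standing for a prediction: the basis vector `e_k` for the label `k`, and
`0` for abstention. -/
noncomputable def predEmbedding (t : Fin (n + 1)) (y : Fin n) : ℝ :=
  if t = y.castSucc then 1 else 0

end AbstainLoss

lemma le_iSup_ne {ι : Type*} [Finite ι] (u : ι → ℝ) {i j : ι} (hj : j ≠ i) :
    u j ≤ ⨆ k : {k // k ≠ i}, u k :=
  le_ciSup (f := fun k : {k // k ≠ i} => u k) (Set.finite_range _).bddAbove ⟨j, hj⟩

section CrammerSinger

variable {n : ℕ} {u : Fin n → ℝ} {y : Fin n}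

/-- The margin `u_(1) - u_(2)`, cut off at `1`. -/
noncomputable def clippedMargin (n : ℕ) (u : Fin n → ℝ) : ℝ := min (top1 n u - top2 n u) 1

lemma clippedMargin_le_one (u : Fin n → ℝ) : clippedMargin n u ≤ 1 := min_le_right _ _

lemma psiCS_nonneg (y : Fin n) (u : Fin n → ℝ) : 0 ≤ psiCS n y u := le_max_right _ _

lemma top1_eq_of_forall_le (hy : ∀ i, u i ≤ u y) : top1 n u = u y :=
  have : Nonempty (Fin n) := ⟨y⟩
  le_antisymm (ciSup_le hy) (le_ciSup (Set.finite_range u).bddAbove y)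

lemma psiCS_predEmbedding (y : Fin n) (t : Fin (n + 1)) :
    psiCS n y (predEmbedding t) = 2 * abstainLoss n (1 / 2) y t := by
  induction t using Fin.lastCases with
  | last => simp [psiCS, predEmbedding, abstainLoss_last, (Fin.castSucc_ne_last _).symm]
  | cast k =>
    simp only [psiCS, predEmbedding, abstainLoss_castSucc, Fin.castSucc_inj]
    rcases eq_or_ne k y with rfl | hk
    · have hsup : ⨆ j : {j // j ≠ k}, (if k = j.1 then (1 : ℝ) else 0) = 0 :=
        (iSup_congr fun j => if_neg j.2.symm).trans Real.iSup_const_zero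
      simp [hsup]
    · have hsup : ⨆ j : {j // j ≠ y}, (if k = j.1 then (1 : ℝ) else 0) = 1 := by
        have : Nonempty {j // j ≠ y} := ⟨k, hk⟩
        refine le_antisymm (ciSup_le fun j => ?_) ?_
        · split_ifs <;> norm_num
        · exact (if_pos rfl).ge.trans (le_iSup_ne (fun j => if k = j then (1 : ℝ) else 0) hk)
      norm_num [hsup, hk]

lemma condBayesRisk_psiCS_le {p : Fin n → ℝ} (hp : ∀ y, 0 ≤ p y) :
    condBayesRisk p (psiCS n) ≤ 2 * condBayesRisk p (abstainLoss n (1 / 2)) :=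
  condBayesRisk_le_mul_of_embedding hp psiCS_nonneg zero_le_two predEmbedding
    fun y t => (psiCS_predEmbedding y t).le

lemma top2_eq_iSup_ne_of_forall_le (hy : ∀ i, u i ≤ u y) :
    top2 n u = ⨆ j : {j : Fin n // j ≠ y}, u j := by
  have : Nonempty (Fin n) := ⟨y⟩
  refine le_antisymm (ciInf_le (Set.finite_range _).bddBelow y) (le_ciInf fun i => ?_)
  rcases eq_or_ne y i with rfl | hi
  · exact le_rfl
  · have : Nonempty {j // j ≠ y} := ⟨i, hi.symm⟩
    exact (ciSup_le fun j : {j : Fin n // j ≠ y} => hy j).trans (le_iSup_ne u hi)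

lemma clippedMargin_nonneg [Nontrivial (Fin n)] (u : Fin n → ℝ) : 0 ≤ clippedMargin n u := by
  obtain ⟨y, hy⟩ := Finite.exists_max u
  have := nonempty_subtype.mpr (exists_ne y)
  refine le_min (sub_nonneg.mpr ?_) zero_le_one
  rw [top1_eq_of_forall_le hy, top2_eq_iSup_ne_of_forall_le hy]
  exact ciSup_le fun j => hy j

lemma psiCS_eq_one_sub_clippedMargin (hy : ∀ i, u i ≤ u y) :
    psiCS n y u = 1 - clippedMargin n u := by
  rw [clippedMargin, ← max_sub_sub_left, sub_self, psiCS, top1_eq_of_forall_le hy,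
    top2_eq_iSup_ne_of_forall_le hy]
  congr 1
  ring

lemma one_add_clippedMargin_le_psiCS (hy : ∀ i, u i ≤ u y) {i : Fin n} (hi : i ≠ y) :
    1 + clippedMargin n u ≤ psiCS n i u := by
  have hmax : u y ≤ ⨆ j : {j : Fin n // j ≠ i}, u j := le_iSup_ne u hi.symm
  have hsecond : u i ≤ top2 n u := top2_eq_iSup_ne_of_forall_le hy ▸ le_iSup_ne u hi
  calc 1 + clippedMargin n u ≤ 1 + (u y - top2 n u) := by
        rw [← top1_eq_of_forall_le hy]
        gcongr
        exact min_le_left _ _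
    _ ≤ (⨆ j : {j : Fin n // j ≠ i}, u j) - u i + 1 := by linarith
    _ ≤ psiCS n i u := le_max_left _ _

lemma abstainLoss_interpolation_le_psiCS (hy : ∀ i, u i ≤ u y) (i : Fin n) :
    2 * (1 - clippedMargin n u) * abstainLoss n (1 / 2) i (Fin.last n) +
      2 * clippedMargin n u * abstainLoss n (1 / 2) i y.castSucc ≤ psiCS n i u := by
  rw [abstainLoss_last, abstainLoss_castSucc]
  split_ifs with hi
  · subst hi
    linarith [psiCS_eq_one_sub_clippedMargin hy]
  · linarith [one_add_clippedMargin_le_psiCS hy (Ne.symm hi)]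

lemma condRegret_interpolation_le_psiCS {p : Fin n → ℝ} (hp : ∀ i, 0 ≤ p i)
    (hy : ∀ i, u i ≤ u y) :
    2 * (1 - clippedMargin n u) * condRegret p (abstainLoss n (1 / 2)) (Fin.last n) +
      2 * clippedMargin n u * condRegret p (abstainLoss n (1 / 2)) y.castSucc ≤
        condRegret p (psiCS n) u := by
  have hrisk := add_mul_condRisk_le_of_forall_le hp (abstainLoss_interpolation_le_psiCS hy)
  have hbayes := condBayesRisk_psiCS_le hp
  unfold condRegret
  linarith

end CrammerSinger

section Prediction

variable {n : ℕ} {τ : ℝ} {u : Fin n → ℝ}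

lemma predCS_eq_last (h : top1 n u - top2 n u ≤ τ) : predCS n τ u = Fin.last n :=
  dif_neg fun h' => h'.1.not_ge h

lemma exists_predCS_eq_castSucc [Nonempty (Fin n)] (h : τ < top1 n u - top2 n u) :
    ∃ y : Fin n, (∀ i, u i ≤ u y) ∧ predCS n τ u = y.castSucc :=
  have h' : τ < top1 n u - top2 n u ∧ ∃ y : Fin n, ∀ i, u i ≤ u y := ⟨h, Finite.exists_max u⟩
  ⟨h'.2.choose, h'.2.choose_spec, dif_pos h'⟩

end Prediction

theorem psiCS_calibration_general (n : ℕ) (hn : 2 ≤ n) (τ : ℝ) (p : Fin n → ℝ)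
    (hp : ∀ i, 0 ≤ p i) (u : Fin n → ℝ) :
    2 * min τ (1 - τ) * condRegret p (abstainLoss n (1 / 2)) (predCS n τ u) ≤
      condRegret p (psiCS n) u := by
  have : Nontrivial (Fin n) := Fin.nontrivial_iff_two_le.mpr hn
  have hregret := condRegret_nonneg hp (abstainLoss_nonneg (n := n) one_half_pos.le)
  rcases lt_or_ge τ (top1 n u - top2 n u) with hτ | hτ
  · obtain ⟨y, hy, hpred⟩ := exists_predCS_eq_castSucc hτ
    have hmin_le_one : min τ (1 - τ) ≤ 1 := by
      linarith [min_le_left τ (1 - τ), min_le_right τ (1 - τ)]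
    have hweight : min τ (1 - τ) ≤ clippedMargin n u :=
      le_min ((min_le_left _ _).trans hτ.le) hmin_le_one
    have hlast := mul_nonneg (sub_nonneg.mpr (clippedMargin_le_one u)) (hregret (Fin.last n))
    have hlabel := mul_le_mul_of_nonneg_right hweight (hregret y.castSucc)
    rw [hpred]
    linarith [condRegret_interpolation_le_psiCS hp hy]
  · obtain ⟨y, hy⟩ := Finite.exists_max u
    have hweight : min τ (1 - τ) ≤ 1 - clippedMargin n u :=
      (min_le_right _ _).trans (sub_le_sub_left ((min_le_left _ _).trans hτ) 1)
    have hlast := mul_le_mul_of_nonneg_right hweight (hregret (Fin.last n))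
    have hlabel := mul_nonneg (clippedMargin_nonneg u) (hregret y.castSucc)
    rw [predCS_eq_last hτ]
    linarith [condRegret_interpolation_le_psiCS hp hy]

theorem psiCS_calibration (n : ℕ) (hn : 2 ≤ n) (τ : ℝ) (hτ0 : 0 < τ) (hτ1 : τ < 1)
    (p : Fin n → ℝ) (hp0 : ∀ i, 0 ≤ p i) (hp1 : ∑ i, p i = 1) (u : Fin n → ℝ) :
    (∑ y, p y * psiCS n y u) - (⨅ u' : Fin n → ℝ, ∑ y, p y * psiCS n y u') ≥
      2 * min τ (1 - τ) *
        ((∑ y, p y * abstainLoss n (1/2) y (predCS n τ u)) -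
          ⨅ t : Fin (n + 1), ∑ y, p y * abstainLoss n (1/2) y t) :=
  psiCS_calibration_general n hn τ p hp0 u
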